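/- Let f be the local rule of width 4 with code number 56528, and define g : ℤ^4 → ℤ by g(x_0,x_1,x_2,x_3) = x_1 − 1 + δ_{2, x_2 − x_1}. Then for every strictly increasing s : ℤ → ℤ, the function t = g_{∞,1}(s) is strictly increasing and φ(t) = f_∞(φ(s)). -/

import Mathlib

/-- For a (strictly increasing) `s : ℤ → ℤ`, `phi s` is the occupancy bisequence:
`phi s i = 1` iff `i` lies in the range of `s`. -/
noncomputable def phi (s : ℤ → ℤ) (i : ℤ) : Fin 2 :=
  haveI := Classical.propDecidable (i ∈ Set.range s)
  if i ∈ Set.range s then 1 else 0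

/-- The local rule of width 4 with code number `C`: `f(x₁,x₂,x₃,x₄)` is the
binary digit of `C` at position `8x₁ + 4x₂ + 2x₃ + x₄`. -/
def ruleOfCode (C : ℕ) (x : Fin 4 → Fin 2) : Fin 2 :=
  if C.testBit (8 * (x 0 : ℕ) + 4 * (x 1 : ℕ) + 2 * (x 2 : ℕ) + (x 3 : ℕ)) then 1 else 0

/-- The step function: `Θ(m) = 1` if `m > 0` and `Θ(m) = 0` otherwise. -/
def theta (m : ℤ) : ℤ := if 0 < m then 1 else 0

/-- The delta function: `δ_{m,n} = 1` if `m = n` and `δ_{m,n} = 0` otherwise. -/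
def deltaZ (m k : ℤ) : ℤ := if m = k then 1 else 0

/-!
In `φ(t)` site `n` is occupied either by a particle that stayed at `n`, or by one that moved there
from `n + 1`. A particle at `m` stays exactly when the next one is at `m + 2`, which can be read off
the two sites to its right: they show `01`. Thus the occupancy of `n` depends on the sites
`n, …, n + 3` alone, and the resulting Boolean function has the binary digits of `56528` as its
table. No particle reaches the site to which its right neighbour may move, so order is preserved.
-/

open Set

theorem strictMono_of_interlacing {α : Type*} [Preorder α] {u t : ℤ → α}
    (hut : ∀ i, u i ≤ t i) (htu : ∀ i, t i < u (i + 1)) : StrictMono t :=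
  strictMono_int_of_lt_succ fun i => (htu i).trans_le (hut (i + 1))

theorem isLeast_range_inter_Ioi_succ {ι α : Type*} [LinearOrder ι] [SuccOrder ι] [NoMaxOrder ι]
    [Preorder α] {s : ι → α} (hs : StrictMono s) (i : ι) :
    IsLeast (range s ∩ Ioi (s i)) (s (Order.succ i)) := by
  refine ⟨⟨mem_range_self _, hs (Order.lt_succ i)⟩, ?_⟩
  rintro _ ⟨⟨j, rfl⟩, hij⟩
  exact hs.monotone (Order.succ_le_of_lt (hs.lt_iff_lt.mp hij))

/-- The configuration with occupied sites `A` reads `01` on the two sites right of `n`: when `n` is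
itself occupied, the distance from `n` to the next particle is two. -/
def HasGapTwo (A : Set ℤ) (n : ℤ) : Prop :=
  n + 1 ∉ A ∧ n + 2 ∈ A

/-- The map `g_{∞,1}` on particle positions for `g(x₀, x₁, x₂, x₃) = x₁ - 1 + δ_{2, x₂ - x₁}`: a
particle whose right neighbour is at distance two stays, every other one moves one site left. -/
def particleMap (s : ℤ → ℤ) (i : ℤ) : ℤ :=
  s i - 1 + deltaZ 2 (s (i + 1) - s i)

theorem isLeast_inter_Ioi_add_two_iff {A : Set ℤ} {n : ℤ} :
    IsLeast (A ∩ Ioi n) (n + 2) ↔ HasGapTwo A n := by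
  constructor
  · rintro ⟨⟨hmem, -⟩, hleast⟩
    refine ⟨fun hn => ?_, hmem⟩
    have : n + 2 ≤ n + 1 := hleast ⟨hn, lt_add_one n⟩
    omega
  · rintro ⟨hnot, hmem⟩
    refine ⟨⟨hmem, lt_add_of_pos_right n two_pos⟩, ?_⟩
    rintro m ⟨hm, hnm : n < m⟩
    have : m ≠ n + 1 := ne_of_mem_of_not_mem hm hnot
    omega

section ParticleMap

variable {s : ℤ → ℤ}

theorem apply_add_one_eq_add_two_iff (hs : StrictMono s) (j : ℤ) :
    s (j + 1) = s j + 2 ↔ HasGapTwo (range s) (s j) :=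
  (isLeast_range_inter_Ioi_succ hs j).isLeast_iff_eq.symm.trans isLeast_inter_Ioi_add_two_iff

theorem particleMap_of_gap_eq {j : ℤ} (h : s (j + 1) = s j + 2) : particleMap s j = s j := by
  simp [particleMap, deltaZ, h]

theorem particleMap_of_gap_ne {j : ℤ} (h : s (j + 1) ≠ s j + 2) :
    particleMap s j = s j - 1 := by
  have : 2 ≠ s (j + 1) - s j := by omega
  simp [particleMap, deltaZ, this]

theorem sub_one_le_particleMap (s : ℤ → ℤ) (j : ℤ) : s j - 1 ≤ particleMap s j := by
  by_cases h : s (j + 1) = s j + 2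
  · exact (particleMap_of_gap_eq h).symm ▸ sub_le_self (s j) zero_le_one
  · exact (particleMap_of_gap_ne h).ge

theorem particleMap_lt_sub_one (hs : StrictMono s) (j : ℤ) :
    particleMap s j < s (j + 1) - 1 := by
  by_cases h : s (j + 1) = s j + 2
  · rw [particleMap_of_gap_eq h]
    omega
  · rw [particleMap_of_gap_ne h]
    exact sub_lt_sub_right (hs (lt_add_one j)) 1

theorem strictMono_particleMap (hs : StrictMono s) : StrictMono (particleMap s) :=
  strictMono_of_interlacing (sub_one_le_particleMap s) (particleMap_lt_sub_one hs)

theorem particleMap_eq_iff (hs : StrictMono s) {j n : ℤ} :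
    particleMap s j = n ↔
      (s j = n ∧ HasGapTwo (range s) n) ∨ (s j = n + 1 ∧ ¬HasGapTwo (range s) (n + 1)) := by
  by_cases h : s (j + 1) = s j + 2
  · have hgap : HasGapTwo (range s) (s j) := (apply_add_one_eq_add_two_iff hs j).mp h
    rw [particleMap_of_gap_eq h]
    grind
  · have hgap : ¬HasGapTwo (range s) (s j) := mt (apply_add_one_eq_add_two_iff hs j).mpr h
    rw [particleMap_of_gap_ne h, sub_eq_iff_eq_add]
    grind

theorem mem_range_particleMap_iff (hs : StrictMono s) {n : ℤ} :
    n ∈ range (particleMap s) ↔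
      (n ∈ range s ∧ HasGapTwo (range s) n) ∨
        (n + 1 ∈ range s ∧ ¬HasGapTwo (range s) (n + 1)) := by
  simp only [mem_range (f := particleMap s), particleMap_eq_iff hs, exists_or, exists_and_right,
    mem_range (f := s)]

end ParticleMap

theorem phi_eq_iff {s : ℤ → ℤ} {n : ℤ} {a : Fin 2} : phi s n = a ↔ (n ∈ range s ↔ a = 1) := by
  unfold phi
  split_ifs with h <;> fin_cases a <;> simp [h]

theorem phi_eq_one_iff {s : ℤ → ℤ} {n : ℤ} : phi s n = 1 ↔ n ∈ range s := by
  simp [phi_eq_iff]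

theorem phi_eq_zero_iff {s : ℤ → ℤ} {n : ℤ} : phi s n = 0 ↔ n ∉ range s := by
  simp [phi_eq_iff]

theorem ruleOfCode_56528_eq_one_iff (x : Fin 4 → Fin 2) :
    ruleOfCode 56528 x = 1 ↔
      (x 0 = 1 ∧ x 1 = 0 ∧ x 2 = 1) ∨ (x 1 = 1 ∧ ¬(x 2 = 0 ∧ x 3 = 1)) := by
  decide +revert

theorem ruleOfCode_56528_phi_eq_one_iff (s : ℤ → ℤ) (n : ℤ) :
    ruleOfCode 56528 (fun k : Fin 4 => phi s (n + (k : ℕ))) = 1 ↔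
      (n ∈ range s ∧ HasGapTwo (range s) n) ∨
        (n + 1 ∈ range s ∧ ¬HasGapTwo (range s) (n + 1)) := by
  have htwo : n + 1 + 1 = n + 2 := by ring
  have hthree : n + 1 + 2 = n + 3 := by ring
  simp [ruleOfCode_56528_eq_one_iff, phi_eq_one_iff, phi_eq_zero_iff, HasGapTwo, htwo, hthree,
    -mem_range]

/-- For the conservative 4-input rule with code number 56528 and the particle
mapping `g(x₀,x₁,x₂,x₃) = x₁ - 1 + δ_{2, x₂ - x₁}`: for every strictly increasing `s : ℤ → ℤ`,
the bisequence `t = g_{∞,1}(s)`, `t i = g (s (i-1)) (s i) (s (i+1)) (s (i+2))`,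
is strictly increasing and `φ(t) = f_∞(φ(s))`. -/
theorem stmt_15 (s : ℤ → ℤ) (hs : StrictMono s) :
    StrictMono (fun i : ℤ => s i - 1 + deltaZ 2 (s (i + 1) - s i)) ∧
    ∀ i : ℤ,
      phi (fun i : ℤ => s i - 1 + deltaZ 2 (s (i + 1) - s i)) i =
        ruleOfCode 56528 (fun k : Fin 4 => phi s (i + (k : ℕ))) := by
  refine ⟨strictMono_particleMap hs, fun i => phi_eq_iff.mpr ?_⟩
  exact (mem_range_particleMap_iff hs).trans (ruleOfCode_56528_phi_eq_one_iff s i).symm
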